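/- Gaussian limit of averages over near-spherical cells (Lemma): let m ≥ 1, η > 0, M ≥ 0, and f : ℝ^m → [−M, M] a bounded measurable function. Suppose that for each k, P₀^{(k)} ⊆ ℝ^k is a measurable set whose volume V_k equals the volume B_k(k^{1/2} η) of the k-dimensional ball of radius k^{1/2} η, and that Vol( B_k(k^{1/2} η) \ P₀^{(k)} ) / B_k(k^{1/2} η) → 0 as k → ∞. Then lim_{k→∞} (1/V_k) ∫_{P₀^{(k)}} f(τ₁,…,τ_m) dτ = ∫_{ℝ^m} f(τ) (2πη²)^{−m/2} exp(−‖τ‖²/(2η²)) dτ. -/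

import Mathlib

open MeasureTheory Real Filter Topology
open scoped ENNReal NNReal

/-- The volume of the `n`-dimensional Euclidean ball of radius `r`:
`π^{n/2} r^n / Γ(n/2 + 1)`. -/
noncomputable def Bvol (n : ℕ) (r : ℝ) : ℝ :=
  Real.pi ^ ((n : ℝ) / 2) * r ^ n / Real.Gamma ((n : ℝ) / 2 + 1)

/-- The `n`-dimensional Euclidean ball of radius `r` centered at the origin, as a subset of
`ℝ^n` (with the Euclidean norm). -/
def euclBall (n : ℕ) (r : ℝ) : Set (Fin n → ℝ) :=
  {x | ∑ i, (x i) ^ 2 ≤ r ^ 2}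

lemma vol_euclBall (n : ℕ) (hn : 1 ≤ n) (r : ℝ) (hr : 0 ≤ r) :
    volume (euclBall n r) = ENNReal.ofReal (Bvol n r) := by
  have : Nonempty (Fin n) := ⟨⟨0, hn⟩⟩
  have h := EuclideanSpace.volume_closedBall (Fin n) 0 r
  rw [← (PiLp.volume_preserving_toLp (Fin n)).measure_preimage
      measurableSet_closedBall.nullMeasurableSet] at h
  have hs : (@WithLp.toLp 2 (Fin n → ℝ)) ⁻¹' Metric.closedBall 0 r = euclBall n r := by
    ext x
    simp only [Set.mem_preimage, Metric.mem_closedBall, dist_zero_right, euclBall,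
      Set.mem_ofPred_eq, EuclideanSpace.norm_eq, Real.norm_eq_abs, sq_abs]
    exact Real.sqrt_le_left hr
  rw [hs, Fintype.card_fin, ← ENNReal.ofReal_pow hr, ← ENNReal.ofReal_mul (by positivity)] at h
  rw [h, Bvol]
  congr 1
  rw [Real.sqrt_eq_rpow, ← Real.rpow_natCast (π ^ (1 / 2 : ℝ)), ← Real.rpow_mul pi_pos.le]
  rw [show (1 / 2 : ℝ) * n = n / 2 by ring]
  ring

lemma measurableSet_euclBall (n : ℕ) (r : ℝ) : MeasurableSet (euclBall n r) :=
  measurableSet_le (by fun_prop) measurable_const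

lemma Bvol_pos (n : ℕ) (r : ℝ) (hr : 0 < r) : 0 < Bvol n r := by
  unfold Bvol
  have := Real.Gamma_pos_of_pos (show (0 : ℝ) < (n : ℝ) / 2 + 1 by positivity)
  positivity

lemma append_mp (m k : ℕ) :
    MeasurePreserving (fun p : (Fin m → ℝ) × (Fin k → ℝ) => Fin.append p.1 p.2) volume volume := by
  have h1 := (volume_measurePreserving_sumPiEquivProdPi_symm
    (fun _ : Fin m ⊕ Fin k => ℝ))
  have h2 := volume_measurePreserving_piCongrLeft (fun _ : Fin (m + k) => ℝ) finSumFinEquiv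
  have h3 := h2.comp h1
  convert h3 using 1
  funext p
  obtain ⟨u, v⟩ := p
  funext i
  simp only [Function.comp]
  refine Fin.addCases (fun j => ?_) (fun j => ?_) i
  · rw [Fin.append_left, ← finSumFinEquiv_apply_left]
    exact (Equiv.piCongrLeft_sumInl (fun _ : Fin (m + k) => ℝ) finSumFinEquiv u v j).symm
  · rw [Fin.append_right, ← finSumFinEquiv_apply_right]
    exact (Equiv.piCongrLeft_sumInr (fun _ : Fin (m + k) => ℝ) finSumFinEquiv u v j).symm

lemma append_emb (m k : ℕ) :
    MeasurableEmbedding (fun p : (Fin m → ℝ) × (Fin k → ℝ) => Fin.append p.1 p.2) := by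
  let e : (Fin m → ℝ) × (Fin k → ℝ) ≃ᵐ (Fin (m + k) → ℝ) :=
    { toEquiv := Fin.appendEquiv m k
      measurable_toFun := (append_mp m k).measurable
      measurable_invFun := by
        refine Measurable.prodMk ?_ ?_ <;>
        · refine measurable_pi_lambda _ fun i => ?_
          exact measurable_pi_apply _ }
  exact e.measurableEmbedding

lemma slice_vol (k : ℕ) (hk : 1 ≤ k) (R : ℝ) (hR : 0 < R) (t : ℝ) :
    (volume {v : Fin k → ℝ | t + ∑ i, (v i) ^ 2 ≤ R ^ 2}).toReal =
      Bvol k R * √(1 - t / R ^ 2) ^ k := by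
  have hfac : R ^ 2 - t = R ^ 2 * (1 - t / R ^ 2) := by field_simp
  by_cases ht : t ≤ R ^ 2
  · have : {v : Fin k → ℝ | t + ∑ i, (v i) ^ 2 ≤ R ^ 2} = euclBall k (√(R ^ 2 - t)) := by
      ext v
      simp only [euclBall, Set.mem_ofPred_eq]
      rw [Real.sq_sqrt (by linarith)]
      constructor <;> intro h <;> linarith
    rw [this, vol_euclBall k hk _ (Real.sqrt_nonneg _), hfac, Real.sqrt_mul (by positivity),
      Real.sqrt_sq hR.le]
    have hnn : 0 ≤ Bvol k (R * √(1 - t / R ^ 2)) := by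
      unfold Bvol
      have := Real.Gamma_pos_of_pos (show (0 : ℝ) < (k : ℝ) / 2 + 1 by positivity)
      positivity
    rw [ENNReal.toReal_ofReal hnn]
    unfold Bvol
    ring
  · have : {v : Fin k → ℝ | t + ∑ i, (v i) ^ 2 ≤ R ^ 2} = ∅ := by
      ext v
      simp only [Set.mem_ofPred_eq, Set.mem_empty_iff_false, iff_false, not_le]
      have : 0 ≤ ∑ i, (v i) ^ 2 := Finset.sum_nonneg fun i _ => sq_nonneg _
      linarith
    rw [this, Real.sqrt_eq_zero_of_nonpos, zero_pow (by omega)]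
    · simp
    · have : 1 < t / R ^ 2 := by rw [lt_div_iff₀ (by positivity)]; linarith
      linarith

lemma ball_integral (m k : ℕ) (hk : 1 ≤ k) (R : ℝ) (hR : 0 < R) (M : ℝ)
    (f : (Fin m → ℝ) → ℝ) (hfm : Measurable f) (hfb : ∀ x, |f x| ≤ M) :
    ∫ τ in euclBall (m + k) R, f (fun i => τ (Fin.castLE (Nat.le_add_right m k) i)) =
      Bvol k R * ∫ u : Fin m → ℝ, f u * √(1 - (∑ i, (u i) ^ 2) / R ^ 2) ^ k := by
  rw [← (append_mp m k).setIntegral_preimage_emb (append_emb m k)]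
  have hpre : (fun p : (Fin m → ℝ) × (Fin k → ℝ) => Fin.append p.1 p.2) ⁻¹' euclBall (m + k) R
      = {p | ∑ i, (p.1 i) ^ 2 + ∑ i, (p.2 i) ^ 2 ≤ R ^ 2} := by
    ext p
    simp [euclBall, Fin.sum_univ_add]
  have hms : MeasurableSet ({p | ∑ i, (p.1 i) ^ 2 + ∑ i, (p.2 i) ^ 2 ≤ R ^ 2} :
      Set ((Fin m → ℝ) × (Fin k → ℝ))) := measurableSet_le (by fun_prop) measurable_const
  have hfin : volume ({p | ∑ i, (p.1 i) ^ 2 + ∑ i, (p.2 i) ^ 2 ≤ R ^ 2} :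
      Set ((Fin m → ℝ) × (Fin k → ℝ))) ≠ ∞ := by
    rw [← hpre, (append_mp m k).measure_preimage_emb (append_emb m k),
      vol_euclBall _ (by omega) _ hR.le]
    exact ENNReal.ofReal_ne_top
  rw [hpre]
  simp only [Fin.append_left']
  rw [← integral_indicator hms, Measure.volume_eq_prod, integral_prod]
  · rw [← integral_const_mul]
    congr 1
    funext u
    have : ∀ v : Fin k → ℝ, ({p | ∑ i, (p.1 i) ^ 2 + ∑ i, (p.2 i) ^ 2 ≤ R ^ 2} :
        Set ((Fin m → ℝ) × (Fin k → ℝ))).indicator (fun p => f p.1) (u, v) =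
        ({v : Fin k → ℝ | ∑ i, (u i) ^ 2 + ∑ i, (v i) ^ 2 ≤ R ^ 2}).indicator (fun _ => f u) v := by
      intro v
      simp only [Set.indicator, Set.mem_ofPred_eq]
    simp_rw [this]
    rw [integral_indicator (measurableSet_le (by fun_prop) measurable_const), setIntegral_const,
      Measure.real, slice_vol k hk R hR, smul_eq_mul]
    ring
  · rw [integrable_indicator_iff hms]
    refine Measure.integrableOn_of_bounded (M := M) ?_ ?_ ?_
    · rw [← Measure.volume_eq_prod]; exact hfin
    · exact (hfm.comp measurable_fst).aestronglyMeasurable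
    · exact Eventually.of_forall fun p => by simpa using hfb p.1

lemma gauss_integrable (m : ℕ) (b : ℝ) (hb : 0 < b) :
    Integrable (fun u : Fin m → ℝ => Real.exp (-b * ∑ i, (u i) ^ 2)) := by
  have := Integrable.fintype_prod (ι := Fin m) (μ := fun _ => volume)
    (f := fun _ (x : ℝ) => Real.exp (-b * x ^ 2)) (fun _ => integrable_exp_neg_mul_sq hb)
  have he : (fun u : Fin m → ℝ => Real.exp (-b * ∑ i, (u i) ^ 2)) =
      fun u : Fin m → ℝ => ∏ i, Real.exp (-b * (u i) ^ 2) := by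
    funext u
    rw [Finset.mul_sum, Real.exp_sum]
  rw [he]
  exact this

lemma gauss_integral (m : ℕ) (b : ℝ) :
    ∫ u : Fin m → ℝ, Real.exp (-b * ∑ i, (u i) ^ 2) = √(π / b) ^ m := by
  have := integral_fintype_prod_volume_eq_pow (ι := Fin m) (fun x : ℝ => Real.exp (-b * x ^ 2))
  rw [Fintype.card_fin, integral_gaussian] at this
  rw [← this]
  congr 1
  funext u
  rw [Finset.mul_sum, Real.exp_sum]

lemma h_tendsto (m : ℕ) (η : ℝ) (hη : 0 < η) (t : ℝ) :
    Tendsto (fun k : ℕ => √(1 - t / (√((m + k : ℕ) : ℝ) * η) ^ 2) ^ k) atTop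
      (𝓝 (Real.exp (-(1 / (2 * η ^ 2)) * t))) := by
  have hN : Tendsto (fun k : ℕ => ((k : ℝ) / (k + m : ℝ))) atTop (𝓝 1) :=
    tendsto_natCast_div_add_atTop (m : ℝ)
  have hg : Tendsto (fun k : ℕ => (k : ℝ) * (-(t / ((k + m : ℝ) * η ^ 2)))) atTop
      (𝓝 (-(t / η ^ 2))) := by
    have := hN.mul_const (-(t / η ^ 2))
    rw [one_mul] at this
    refine this.congr fun k => ?_
    rw [mul_comm (k + m : ℝ), ← div_div t]
    ring
  have h1 := (Real.continuous_sqrt.tendsto _).comp (Real.tendsto_one_add_pow_exp_of_tendsto hg)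
  have hlim : √(Real.exp (-(t / η ^ 2))) = Real.exp (-(1 / (2 * η ^ 2)) * t) := by
    rw [← Real.exp_half]
    congr 1
    field_simp
  rw [hlim] at h1
  refine h1.congr' ?_
  have hz : Tendsto (fun k : ℕ => (-(t / ((k + m : ℝ) * η ^ 2)))) atTop (𝓝 0) := by
    have : Tendsto (fun k : ℕ => ((k + m : ℝ) * η ^ 2)) atTop atTop :=
      (tendsto_atTop_add_const_right _ _ tendsto_natCast_atTop_atTop).atTop_mul_const
        (by positivity)
    simpa using (this.const_div_atTop t).neg
  filter_upwards [hz.eventually (lt_mem_nhds (show (-1 : ℝ) < 0 by norm_num))] with k hk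
  simp only [Function.comp]
  rw [mul_pow, Real.sq_sqrt (by positivity)]
  have hp : ∀ a : ℝ, 0 ≤ a → √(a ^ k) = √a ^ k := fun a ha => by
    rw [Real.sqrt_eq_iff_mul_self_eq (by positivity) (by positivity), ← mul_pow,
      Real.mul_self_sqrt ha]
  rw [hp _ (by linarith)]
  push_cast
  rw [add_comm (m : ℝ), ← sub_eq_add_neg]

lemma h_bound (m k : ℕ) (hk : 1 ≤ k) (η : ℝ) (hη : 0 < η) (t : ℝ) (ht : 0 ≤ t) :
    √(1 - t / (√((m + k : ℕ) : ℝ) * η) ^ 2) ^ k ≤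
      Real.exp (-(1 / (2 * η ^ 2 * (m + 1))) * t) := by
  rw [mul_pow, Real.sq_sqrt (by positivity)]
  have hk' : (1 : ℝ) ≤ k := by exact_mod_cast hk
  have hm' : (0 : ℝ) ≤ m := by positivity
  push_cast
  have h1 : √(1 - t / ((m + k : ℝ) * η ^ 2)) ≤ Real.exp (-(t / ((m + k : ℝ) * η ^ 2)) / 2) := by
    rw [Real.exp_half]
    apply Real.sqrt_le_sqrt
    have := Real.add_one_le_exp (-(t / ((m + k : ℝ) * η ^ 2)))
    linarith
  calc _ ≤ Real.exp (-(t / ((m + k : ℝ) * η ^ 2)) / 2) ^ k :=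
        pow_le_pow_left₀ (Real.sqrt_nonneg _) h1 k
    _ = Real.exp (k * (-(t / ((m + k : ℝ) * η ^ 2)) / 2)) := by rw [Real.exp_nat_mul]
    _ ≤ _ := by
      apply Real.exp_le_exp.2
      have e1 : (k : ℝ) * (-(t / ((m + k : ℝ) * η ^ 2)) / 2) =
        -((k / (m + k)) * (t / (2 * η ^ 2))) := by field_simp
      have e2 : -(1 / (2 * η ^ 2 * (m + 1))) * t = -((1 / (m + 1)) * (t / (2 * η ^ 2))) := by
        field_simp
      rw [e1, e2]
      apply neg_le_neg
      apply mul_le_mul_of_nonneg_right _ (by positivity)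
      rw [div_le_div_iff₀ (by positivity) (by positivity)]
      nlinarith

lemma fh_tendsto (m : ℕ) (η : ℝ) (hη : 0 < η) (M : ℝ) (hM : 0 ≤ M)
    (f : (Fin m → ℝ) → ℝ) (hfm : Measurable f) (hfb : ∀ x, |f x| ≤ M) :
    Tendsto (fun k : ℕ => ∫ u : Fin m → ℝ,
        f u * √(1 - (∑ i, (u i) ^ 2) / (√((m + k : ℕ) : ℝ) * η) ^ 2) ^ k) atTop
      (𝓝 (∫ u : Fin m → ℝ, f u * Real.exp (-(1 / (2 * η ^ 2)) * ∑ i, (u i) ^ 2))) := by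
  refine tendsto_integral_filter_of_dominated_convergence
    (fun u => M * Real.exp (-(1 / (2 * η ^ 2 * (m + 1))) * ∑ i, (u i) ^ 2)) ?_ ?_ ?_ ?_
  · refine Eventually.of_forall fun k => ?_
    refine Measurable.aestronglyMeasurable (hfm.mul ?_)
    fun_prop
  · filter_upwards [eventually_ge_atTop 1] with k hk
    refine Eventually.of_forall fun u => ?_
    rw [norm_mul, Real.norm_eq_abs, Real.norm_eq_abs, abs_of_nonneg (a := √_ ^ k) (by positivity)]
    exact mul_le_mul (hfb u)
      (h_bound m k hk η hη _ (Finset.sum_nonneg fun i _ => sq_nonneg _)) (by positivity) hM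
  · exact (gauss_integrable m _ (by positivity)).const_mul M
  · exact Eventually.of_forall fun u => (h_tendsto m η hη _).const_mul _

lemma ball_average (m : ℕ) (hm : 1 ≤ m) (η : ℝ) (hη : 0 < η) (M : ℝ) (hM : 0 ≤ M)
    (f : (Fin m → ℝ) → ℝ) (hfm : Measurable f) (hfb : ∀ x, |f x| ≤ M) :
    Tendsto (fun k : ℕ => (Bvol (m + k) (√((m + k : ℕ) : ℝ) * η))⁻¹ *
        ∫ τ in euclBall (m + k) (√((m + k : ℕ) : ℝ) * η),
          f (fun i => τ (Fin.castLE (Nat.le_add_right m k) i))) atTop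
      (𝓝 (∫ u : Fin m → ℝ, f u * ((2 * Real.pi * η ^ 2) ^ (-(m : ℝ) / 2) *
        Real.exp (-(∑ i, (u i) ^ 2) / (2 * η ^ 2))))) := by
  have hA := fh_tendsto m η hη M hM f hfm hfb
  have hB := fh_tendsto m η hη 1 zero_le_one (fun _ => 1) measurable_const (by simp)
  have hG : ∫ u : Fin m → ℝ, (1 : ℝ) * Real.exp (-(1 / (2 * η ^ 2)) * ∑ i, (u i) ^ 2) =
      (2 * π * η ^ 2) ^ ((m : ℝ) / 2) := by
    simp only [one_mul]
    rw [gauss_integral, show π / (1 / (2 * η ^ 2)) = 2 * π * η ^ 2 by field_simp,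
      Real.sqrt_eq_rpow, ← Real.rpow_natCast, ← Real.rpow_mul (by positivity)]
    congr 1
    ring
  rw [hG] at hB
  have hpos : 0 < (2 * π * η ^ 2) ^ ((m : ℝ) / 2) := by positivity
  have hC := (hB.inv₀ hpos.ne').mul hA
  have hlim : ((2 * π * η ^ 2) ^ ((m : ℝ) / 2))⁻¹ *
      ∫ u : Fin m → ℝ, f u * Real.exp (-(1 / (2 * η ^ 2)) * ∑ i, (u i) ^ 2) =
      ∫ u : Fin m → ℝ, f u * ((2 * Real.pi * η ^ 2) ^ (-(m : ℝ) / 2) *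
        Real.exp (-(∑ i, (u i) ^ 2) / (2 * η ^ 2))) := by
    rw [← integral_const_mul]
    congr 1
    funext u
    rw [neg_div, Real.rpow_neg (by positivity),
      show -(1 / (2 * η ^ 2)) * ∑ i, (u i) ^ 2 = -(∑ i, (u i) ^ 2) / (2 * η ^ 2) by ring]
    ring
  rw [hlim] at hC
  refine hC.congr' ?_
  filter_upwards [eventually_ge_atTop 1] with k hk
  have hR : 0 < √((m + k : ℕ) : ℝ) * η := by
    have : (0 : ℝ) < ((m + k : ℕ) : ℝ) := by exact_mod_cast (by omega)
    positivity
  have h1 := ball_integral m k hk _ hR 1 (fun _ => 1) measurable_const (by simp)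
  rw [setIntegral_const, Measure.real, vol_euclBall _ (by omega) _ hR.le,
    ENNReal.toReal_ofReal (Bvol_pos _ _ hR).le, smul_eq_mul, mul_one] at h1
  rw [h1, ball_integral m k hk _ hR M f hfm hfb]
  have := (Bvol_pos k _ hR).ne'
  rw [mul_inv]
  field_simp

/-- Gaussian limit of averages over near-spherical cells.  Let `P₀^{(k)} ⊆ ℝ^k` be
measurable sets whose volume equals that of the `k`-dimensional ball of radius `√k · η` and whose
relative symmetric difference with that ball vanishes as `k → ∞`.  Then for any bounded
measurable `f : ℝ^m → [−M, M]`, the average of `f(τ₁, …, τ_m)` over `P₀^{(k)}` converges to the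
integral of `f` against the i.i.d. `N(0, η²)` Gaussian density on `ℝ^m`. -/
theorem cell_average_gaussian_limit {m : ℕ} (hm : 1 ≤ m) (η : ℝ) (hη : 0 < η)
    (M : ℝ) (hM : 0 ≤ M) (f : (Fin m → ℝ) → ℝ) (hfm : Measurable f) (hfb : ∀ x, |f x| ≤ M)
    (Pc : (k : ℕ) → Set (Fin k → ℝ)) (hPm : ∀ k, MeasurableSet (Pc k))
    (hPvol : ∀ k, (volume (Pc k)).toReal = Bvol k (Real.sqrt k * η))
    (hPdiff : Tendsto
      (fun k : ℕ => (volume (euclBall k (Real.sqrt k * η) \ Pc k)).toReal /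
        Bvol k (Real.sqrt k * η)) atTop (𝓝 0)) :
    Tendsto
      (fun k : ℕ =>
        ((volume (Pc (m + k))).toReal)⁻¹ *
          ∫ τ in Pc (m + k), f (fun i => τ (Fin.castLE (Nat.le_add_right m k) i)))
      atTop
      (𝓝 (∫ u : Fin m → ℝ, f u * ((2 * Real.pi * η ^ 2) ^ (-(m : ℝ) / 2) *
        Real.exp (-(∑ i, (u i) ^ 2) / (2 * η ^ 2))))) := by
  have hball := ball_average m hm η hη M hM f hfm hfb
  have hshift : Tendsto (fun k : ℕ => m + k) atTop atTop := by
    simpa only [add_comm] using tendsto_add_atTop_nat m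
  have hd := (hPdiff.comp hshift).const_mul (2 * M)
  rw [mul_zero] at hd
  have hzero : Tendsto (fun k : ℕ => ((volume (Pc (m + k))).toReal)⁻¹ *
          (∫ τ in Pc (m + k), f (fun i => τ (Fin.castLE (Nat.le_add_right m k) i))) -
        (Bvol (m + k) (√((m + k : ℕ) : ℝ) * η))⁻¹ *
        ∫ τ in euclBall (m + k) (√((m + k : ℕ) : ℝ) * η),
          f (fun i => τ (Fin.castLE (Nat.le_add_right m k) i))) atTop (𝓝 0) := by
    refine squeeze_zero_norm (fun k => ?_) hd
    have hR : 0 < √((m + k : ℕ) : ℝ) * η := by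
      have : (0 : ℝ) < ((m + k : ℕ) : ℝ) := by exact_mod_cast (by omega)
      positivity
    have hV := Bvol_pos (m + k) _ hR
    have hPv := hPvol (m + k)
    have hBv := vol_euclBall (m + k) (by omega) _ hR.le
    simp only [Function.comp]
    rw [hPv]
    have hPm' := hPm (m + k)
    generalize Pc (m + k) = P at *
    generalize Bvol (m + k) (√((m + k : ℕ) : ℝ) * η) = V at *
    have hBm := measurableSet_euclBall (m + k) (√((m + k : ℕ) : ℝ) * η)
    generalize euclBall (m + k) (√((m + k : ℕ) : ℝ) * η) = B at *
    have hPf : volume P ≠ ∞ := by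
      intro h
      rw [h] at hPv
      simp at hPv
      linarith
    have hBf : volume B ≠ ∞ := by rw [hBv]; exact ENNReal.ofReal_ne_top
    set F : (Fin (m + k) → ℝ) → ℝ := fun τ => f (fun i => τ (Fin.castLE (Nat.le_add_right m k) i))
      with hF
    have hFm : Measurable F := hfm.comp (measurable_pi_lambda _ fun i => measurable_pi_apply _)
    have hFi : ∀ S, volume S ≠ ∞ → IntegrableOn F S := fun S hS =>
      Measure.integrableOn_of_bounded (M := M) hS hFm.aestronglyMeasurable
        (Eventually.of_forall fun p => by simpa using hfb _)
    have hFn : ∀ S, volume S ≠ ∞ → |∫ τ in S, F τ| ≤ M * (volume S).toReal := fun S hS => by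
      have := norm_setIntegral_le_of_norm_le_const (μ := volume) (s := S) (f := F) (C := M)
        hS.lt_top (fun x _ => by simpa using hfb _)
      simpa [Measure.real] using this
    have e1 := integral_inter_add_sdiff hBm (hFi P hPf)
    have e2 := integral_inter_add_sdiff hPm' (hFi B hBf)
    have v1 := measureReal_inter_add_sdiff (μ := volume) (s := P) hBm hPf
    have v2 := measureReal_inter_add_sdiff (μ := volume) (s := B) hPm' hBf
    rw [Set.inter_comm B P] at e2 v2
    have b1 := hFn (P \ B) (measure_ne_top_of_subset Set.sdiff_subset hPf)
    have b2 := hFn (B \ P) (measure_ne_top_of_subset Set.sdiff_subset hBf)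
    have hBr : (volume B).toReal = V := by rw [hBv, ENNReal.toReal_ofReal hV.le]
    simp only [Measure.real] at v1 v2
    have hvd : (volume (P \ B)).toReal = (volume (B \ P)).toReal := by linarith
    rw [← mul_sub, norm_mul, Real.norm_eq_abs, Real.norm_eq_abs, abs_of_pos (inv_pos.2 hV),
      ← e1, ← e2]
    rw [hvd] at b1
    have : |(∫ τ in P ∩ B, F τ) + (∫ τ in P \ B, F τ) -
        ((∫ τ in P ∩ B, F τ) + ∫ τ in B \ P, F τ)| ≤ 2 * M * (volume (B \ P)).toReal := by
      rw [add_sub_add_left_eq_sub]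
      refine (abs_sub _ _).trans ?_
      linarith
    calc _ ≤ V⁻¹ * (2 * M * (volume (B \ P)).toReal) :=
          mul_le_mul_of_nonneg_left this (inv_pos.2 hV).le
      _ = _ := by ring
  have := hzero.add hball
  simpa using this
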